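/- (Type B_n, Weyl group computation.) For all integers r, j with 2 ≤ r < n and r−1 ≤ j ≤ n−1, one has w_{r,j}(ω_r) = ω_{r−2} + α_j; and for all 1 ≤ r < n, one has w_{r,n}(ω_r) = ω_{r−1} + α_n. -/

import Mathlib

/-- The simple reflection `s_i` of type `B_n` acting on coordinate vectors
(coordinates indexed `1, …, n`): for `i < n` it swaps the `i`-th and `(i+1)`-th
coordinates, and `s_n` changes the sign of the `n`-th coordinate. -/
def refB (n : ℕ) (i : ℤ) (x : ℤ → ℝ) : ℤ → ℝ :=
  if i ≤ (n : ℤ) - 1 then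
    fun t => if t = i then x (i + 1) else if t = i + 1 then x i else x t
  else
    fun t => if t = (n : ℤ) then -x (n : ℤ) else x t

/-- The fundamental weight `ω_r = ε_1 + ⋯ + ε_r` (with `ω_0 = 0`). -/
def omegaW (r : ℤ) : ℤ → ℝ := fun t => if 1 ≤ t ∧ t ≤ r then 1 else 0

/-- The simple root `α_j` of type `B_n`: `α_j = ε_j - ε_{j+1}` for `j < n`
and `α_n = ε_n`. -/
def alphaB (n : ℕ) (j : ℤ) : ℤ → ℝ := fun t =>
  if j ≤ (n : ℤ) - 1 then (if t = j then 1 else if t = j + 1 then -1 else 0)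
  else (if t = (n : ℤ) then 1 else 0)

/-- The list of indices of `w_{r,j} = s_{j-1} ⋯ s_{r-1} · s_{j+1} ⋯ s_{n-1} ·
s_n s_{n-1} ⋯ s_r` (rightmost factor applied first, so applied via `foldr`). -/
def wrjIdx (n : ℕ) (r j : ℤ) : List ℤ :=
  ((List.range (j + 1 - r).toNat).map fun t => j - 1 - (t : ℤ))
    ++ ((List.range ((n : ℤ) - 1 - j).toNat).map fun t => j + 1 + (t : ℤ))
    ++ ((List.range ((n : ℤ) + 1 - r).toNat).map fun t => (n : ℤ) - (t : ℤ))

/-- The list of indices of `w_{r,n} = s_{n-1} s_{n-2} ⋯ s_r` (rightmost factor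
applied first). -/
def wrnIdx (n : ℕ) (r : ℤ) : List ℤ :=
  (List.range ((n : ℤ) - r).toNat).map fun t => (n : ℤ) - 1 - (t : ℤ)

theorem refB_apply_of_le {n : ℕ} {i : ℤ} (h : i ≤ (n : ℤ) - 1) (x : ℤ → ℝ) (t : ℤ) :
    refB n i x t = if t = i then x (i + 1) else if t = i + 1 then x i else x t := by
  rw [refB, if_pos h]

theorem refB_self_apply (n : ℕ) (x : ℤ → ℝ) (t : ℤ) :
    refB n n x t = if t = (n : ℤ) then -x n else x t := by
  rw [refB, if_neg (by omega)]

/-- `wrnIdx` as a list indexed directly by natural numbers. -/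
theorem wrnIdx_eq (n : ℕ) (r : ℤ) :
    wrnIdx n r = (List.range ((n : ℤ) - r).toNat).map fun t : ℕ => (n : ℤ) - 1 - (t : ℤ) := by
  simp [wrnIdx, List.map_eq_flatMap, List.flatMap_assoc]

/-- `wrjIdx` as a concatenation of lists indexed directly by natural numbers. -/
theorem wrjIdx_eq (n : ℕ) (r j : ℤ) :
    wrjIdx n r j = ((List.range (j + 1 - r).toNat).map fun t : ℕ => j - 1 - (t : ℤ))
      ++ ((List.range ((n : ℤ) - 1 - j).toNat).map fun t : ℕ => j + 1 + (t : ℤ))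
      ++ ((List.range ((n : ℤ) + 1 - r).toNat).map fun t : ℕ => (n : ℤ) - (t : ℤ)) := by
  simp [wrjIdx, List.map_eq_flatMap, List.flatMap_assoc]

/-- A descending block of transpositions moves the coordinate at its lowest index `p` to `p + m`
and shifts the coordinates in between down by one. -/
theorem foldr_refB_descending (n m : ℕ) (p c : ℤ) (x : ℤ → ℝ) (hc : c = p + m - 1)
    (h : p + m ≤ n) :
    ((List.range m).map fun t : ℕ => c - (t : ℤ)).foldr (refB n) x =
      fun t => if p ≤ t ∧ t < p + m then x (t + 1) else if t = p + m then x p else x t := by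
  induction m generalizing c with
  | zero =>
    funext t
    by_cases ht : t = p
    · simp [ht]
    · have : ¬ (p ≤ t ∧ t < p) := by omega
      simp [ht, this]
  | succ m ih =>
    have e : ((fun t : ℕ => c - (t : ℤ)) ∘ Nat.succ) = fun t : ℕ => (c - 1) - (t : ℤ) := by
      funext t
      simp only [Function.comp_apply]
      push_cast
      ring
    rw [List.range_succ_eq_map, List.map_cons, List.map_map, e, List.foldr_cons,
      ih (c - 1) (by push_cast at hc; omega) (by push_cast at h; omega)]
    funext t
    push_cast at hc h ⊢
    have hcn : c ≤ (n : ℤ) - 1 := by omega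
    rw [sub_zero, refB_apply_of_le hcn]
    clear ih e
    grind

/-- An ascending block of transpositions moves the coordinate at `q + m` to the lowest index `q`
and shifts the coordinates in between up by one. -/
theorem foldr_refB_ascending (n m : ℕ) (q : ℤ) (x : ℤ → ℝ) (h : q + m ≤ n) :
    ((List.range m).map fun t : ℕ => q + (t : ℤ)).foldr (refB n) x =
      fun t => if q < t ∧ t ≤ q + m then x (t - 1) else if t = q then x (q + m) else x t := by
  induction m generalizing x with
  | zero =>
    funext t
    by_cases ht : t = q
    · simp [ht]
    · have : ¬ (q < t ∧ t ≤ q) := by omega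
      simp [ht, this]
  | succ m ih =>
    rw [List.range_succ, List.map_append, List.foldr_append,
      ih _ (by push_cast at h; omega)]
    funext t
    push_cast at h ⊢
    simp only [List.map_cons, List.map_nil, List.foldr_cons, List.foldr_nil]
    have hqn : q + m ≤ (n : ℤ) - 1 := by omega
    simp only [refB_apply_of_le hqn]
    clear ih
    grind

/-- The block `s_n s_{n-1} ⋯ s_r` is `s_n` after the descending block `s_{n-1} ⋯ s_r`. -/
theorem foldr_refB_sign_block (n : ℕ) (r : ℤ) (x : ℤ → ℝ) (h : r ≤ n) :
    ((List.range ((n : ℤ) + 1 - r).toNat).map fun t : ℕ => (n : ℤ) - (t : ℤ)).foldr (refB n) x =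
      refB n n ((wrnIdx n r).foldr (refB n) x) := by
  have e : ((fun t : ℕ => (n : ℤ) - (t : ℤ)) ∘ Nat.succ) = fun t : ℕ => (n : ℤ) - 1 - (t : ℤ) := by
    funext t
    simp only [Function.comp_apply]
    push_cast
    ring
  have hlen : ((n : ℤ) + 1 - r).toNat = ((n : ℤ) - r).toNat + 1 := by omega
  rw [hlen, List.range_succ_eq_map, List.map_cons, List.map_map, e, List.foldr_cons, wrnIdx_eq]
  simp

/-- The block `s_{n-1} ⋯ s_r` sends `ω_r` to `ω_{r-1} + ε_n`. -/
theorem foldr_wrnIdx_omegaW (n : ℕ) (r : ℤ) (h1 : 1 ≤ r) (h2 : r < n) :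
    (wrnIdx n r).foldr (refB n) (omegaW r) = omegaW (r - 1) + alphaB n (n : ℤ) := by
  rw [wrnIdx_eq, foldr_refB_descending n _ r _ _ (by omega) (by omega)]
  have hlen : r + (((n : ℤ) - r).toNat : ℤ) = n := by omega
  rw [hlen]
  funext t
  simp only [Pi.add_apply, omegaW, alphaB]
  grind

/-- type B_n: for `2 ≤ r < n` and `r - 1 ≤ j ≤ n - 1` one has
`w_{r,j}(ω_r) = ω_{r-2} + α_j`; and for `1 ≤ r < n` one has
`w_{r,n}(ω_r) = ω_{r-1} + α_n`. -/
theorem wrj_omega_B (n : ℕ) (hn : 2 ≤ n) :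
    (∀ r j : ℤ, 2 ≤ r → r < (n : ℤ) → r - 1 ≤ j → j ≤ (n : ℤ) - 1 →
      (wrjIdx n r j).foldr (refB n) (omegaW r) = omegaW (r - 2) + alphaB n j) ∧
    (∀ r : ℤ, 1 ≤ r → r < (n : ℤ) →
      (wrnIdx n r).foldr (refB n) (omegaW r) = omegaW (r - 1) + alphaB n (n : ℤ)) := by
  refine ⟨fun r j hr hrn hj hjn => ?_, fun r => foldr_wrnIdx_omegaW n r⟩
  rw [wrjIdx_eq, List.foldr_append, List.foldr_append, foldr_refB_sign_block n r _ hrn.le,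
    foldr_wrnIdx_omegaW n r (by omega) hrn, foldr_refB_ascending n _ _ _ (by omega),
    foldr_refB_descending n _ (r - 1) _ _ (by omega) (by omega)]
  have h1 : r - 1 + ((j + 1 - r).toNat : ℤ) = j := by omega
  have h2 : j + 1 + (((n : ℤ) - 1 - j).toNat : ℤ) = n := by omega
  rw [h1, h2]
  funext t
  simp only [Pi.add_apply, omegaW, alphaB, refB_self_apply]
  grind
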